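/- Assume p_0 = 2, e ≥ 1, and H_R ⊆ F_q × F_q. Then f is even, and #{(x,y) ∈ F_{q^2} × F_{q^2} : y^p − y = x·R(x)} = q² − (p−1)·p^e·q. (Equivalently, the smooth compactification of the affine curve y^p − y = xR(x), which has genus p^e(p−1)/2 and a single point at infinity, is F_{q^2}-minimal.) -/

import Mathlib

open Finset Polynomial

/-- The additive polynomial `R(x) = ∑_{i=0}^e a_i x^{p^i}`, evaluated in any commutative ring. -/
def Rgen {A : Type*} [CommRing A] (p e : ℕ) (a : ℕ → A) (x : A) : A :=
  ∑ i ∈ Finset.range (e + 1), a i * x ^ p ^ i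

/-- `E_R(x) = R(x)^{p^e} + ∑_{i=0}^e (a_i x)^{p^{e-i}}`. -/
def Egen {A : Type*} [CommRing A] (p e : ℕ) (a : ℕ → A) (x : A) : A :=
  Rgen p e a x ^ p ^ e + ∑ i ∈ Finset.range (e + 1), (a i * x) ^ p ^ (e - i)

/-- `f_R(x,y) = -∑_{i=0}^{e-1} ( ∑_{j=0}^{e-i-1} (a_i x^{p^i} y)^{p^j} + (x R(y))^{p^i} )`. -/
def fgen {A : Type*} [CommRing A] (p e : ℕ) (a : ℕ → A) (x y : A) : A :=
  -∑ i ∈ Finset.range e,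
    ((∑ j ∈ Finset.range (e - i), (a i * x ^ p ^ i * y) ^ p ^ j) + (x * Rgen p e a y) ^ p ^ i)

/-- The set `H_R = {(a,b) : E_R(a) = 0, b^p - b = a R(a)}`. -/
def Hset {K : Type*} [CommRing K] (p e : ℕ) (a : ℕ → K) : Set (K × K) :=
  {h | Egen p e a h.1 = 0 ∧ h.2 ^ p - h.2 = h.1 * Rgen p e a h.1}

/-- The group law `(a,b)·(a',b') = (a+a', b+b'+f_R(a,a'))` on `H_R`. -/
def Hmul {K : Type*} [CommRing K] (p e : ℕ) (a : ℕ → K) (h h' : K × K) : K × K :=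
  (h.1 + h'.1, h.2 + h'.2 + fgen p e a h.1 h'.1)

/-!
Let `k ⊆ F` be the subfield with `p` elements and `L` the quadratic extension of `F`. By
Artin–Schreier theory the curve has `p` points over each `x` with `Q(x) = Tr_{L/k}(x R(x)) = 0`
and none over the other `x`. The cocycle `f_R` satisfies
`f_R(x,y)^p - f_R(x,y) = x R(y) + y R(x) - x^{p^e} E_R(y)`, so
`Q(x + y) = Q(x) + Q(y) + Tr(x^{p^e} E_R(y))`.

Sort the `x ∈ L` by `u = Tr_{L/F}(x)`. The form `Q` vanishes on `F`, hence on the coset of `F` with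
trace `u` it is an affine form with linear part `z ↦ Tr_{F/k}(z^{p^e} E_R(u))`. If `E_R(u) ≠ 0`,
exactly `q/p` points of the coset are zeros of `Q`. If `E_R(u) = 0`, then `Q` is constant on the
coset, with value `t^q - t` for any solution `t` of `t^p - t = Tr_{L/F}(x R(x))`; the solution
`t = f_R(x,u) + b`, where `b ∈ F` and `b^p - b = u R(u)`, gives the value `f_R(u,u)`. As
`f_R(X,X)^p - f_R(X,X) = X^{p^e} E_R(X)` in characteristic two, with `E_R` separable of degree
`p^{2e}` and split over `F`, the polynomial `f_R(X,X)` of degree `p^{e-1} + p^{2e-1}` splits. Its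
root `0` has multiplicity `p^e + 1` and its other roots are simple, so it has
`p^{e-1} + p^{2e-1} - p^e` distinct roots, all of them zeros of `E_R`. Summing over
`u` gives the count.

For the parity of `f`, let `ψ` be a nontrivial character of `k` with values `±1`. Then
`S = ∑_{x ∈ F} ψ(Tr_{F/k}(x R(x)))` is an integer with `S² = q · #{u : E_R(u) = 0} = q p^{2e}`,
so `q` is a square.
-/

section Map

variable {A B G : Type*} [CommRing A] [CommRing B] [FunLike G A B] [RingHomClass G A B] {p e : ℕ}

theorem map_Rgen (φ : G) (a : ℕ → A) (x : A) :
    φ (Rgen p e a x) = Rgen p e (fun i => φ (a i)) (φ x) := by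
  simp only [Rgen, map_sum, map_mul, map_pow]

theorem map_Egen (φ : G) (a : ℕ → A) (x : A) :
    φ (Egen p e a x) = Egen p e (fun i => φ (a i)) (φ x) := by
  simp only [Egen, map_add, map_sum, map_mul, map_pow, map_Rgen]

theorem map_fgen (φ : G) (a : ℕ → A) (x y : A) :
    φ (fgen p e a x y) = fgen p e (fun i => φ (a i)) (φ x) (φ y) := by
  simp only [fgen, map_neg, map_add, map_sum, map_mul, map_pow, map_Rgen]

end Map

section Frobenius

variable (k : Type*) {A : Type*} [Field k] [Fintype k] [CommRing A] [Algebra k A]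

local notation "p" => Fintype.card k

theorem frobeniusAlgHom_pow_apply (i : ℕ) (x : A) :
    (FiniteField.frobeniusAlgHom k A ^ i) x = x ^ p ^ i := by
  rw [AlgHom.coe_pow, FiniteField.coe_frobeniusAlgHom, pow_iterate]

theorem add_pow_card_pow (i : ℕ) (x y : A) : (x + y) ^ p ^ i = x ^ p ^ i + y ^ p ^ i := by
  simp only [← frobeniusAlgHom_pow_apply, map_add]

theorem sum_pow_card_pow {ι : Type*} (s : Finset ι) (g : ι → A) (i : ℕ) :
    (∑ j ∈ s, g j) ^ p ^ i = ∑ j ∈ s, g j ^ p ^ i := by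
  simp only [← frobeniusAlgHom_pow_apply, map_sum]

/-- The Artin–Schreier map `t ↦ t ^ p - t` of an algebra over the field `k` with `p` elements,
as a `k`-linear map. -/
def artinSchreier : A →ₗ[k] A :=
  (FiniteField.frobeniusAlgHom k A).toLinearMap - LinearMap.id

theorem artinSchreier_apply (t : A) : artinSchreier k t = t ^ p - t := rfl

theorem artinSchreier_sum_pow (m : ℕ) (x : A) :
    artinSchreier k (∑ j ∈ range m, x ^ p ^ j) = x ^ p ^ m - x := by
  simp only [map_sum, artinSchreier_apply, ← pow_mul, ← pow_succ]
  rw [sum_range_sub (x ^ p ^ ·), pow_zero, pow_one]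

variable (e : ℕ) (a : ℕ → A)

theorem Rgen_add (x y : A) : Rgen p e a (x + y) = Rgen p e a x + Rgen p e a y := by
  simp only [Rgen, add_pow_card_pow, mul_add, sum_add_distrib]

theorem fgen_add_left (x x' y : A) :
    fgen p e a (x + x') y = fgen p e a x y + fgen p e a x' y := by
  simp only [fgen, add_pow_card_pow, mul_add, add_mul, sum_add_distrib]
  abel

theorem artinSchreier_fgen (x y : A) :
    artinSchreier k (fgen p e a x y) =
      x * Rgen p e a y + y * Rgen p e a x - x ^ p ^ e * Egen p e a y := by
  have sum_pow : ∑ i ∈ range (e + 1), (a i * x ^ p ^ i * y) ^ p ^ (e - i) =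
      x ^ p ^ e * ∑ i ∈ range (e + 1), (a i * y) ^ p ^ (e - i) := by
    rw [mul_sum]
    refine sum_congr rfl fun i hi => ?_
    rw [mul_right_comm, mul_pow, ← pow_mul, ← pow_add,
      Nat.add_sub_cancel' (mem_range_succ_iff.1 hi), mul_comm]
  have sum_artinSchreier :
      ∑ i ∈ range e, artinSchreier k (∑ j ∈ range (e - i), (a i * x ^ p ^ i * y) ^ p ^ j) =
        x ^ p ^ e * ∑ i ∈ range (e + 1), (a i * y) ^ p ^ (e - i) - y * Rgen p e a x := by
    have extend := sum_range_succ (fun i => (a i * x ^ p ^ i * y) ^ p ^ (e - i) -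
      a i * x ^ p ^ i * y) e
    simp only [Nat.sub_self, pow_zero, pow_one, sub_self, add_zero] at extend
    simp only [artinSchreier_sum_pow, ← extend, sum_sub_distrib, sum_pow, Rgen, ← sum_mul]
    ring
  rw [fgen, sum_add_distrib, map_neg, map_add, map_sum, sum_artinSchreier, artinSchreier_sum_pow,
    Egen]
  ring

end Frobenius

theorem exists_artinSchreier_eq (k : Type*) {K : Type*} [Field k] [Fintype k] [Field K]
    [IsAlgClosed K] [Algebra k K] (w : K) : ∃ t, artinSchreier k t = w := by
  have natDegree_eq : (X ^ Fintype.card k - X - C w : K[X]).natDegree = Fintype.card k := by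
    rw [natDegree_sub_C, FiniteField.X_pow_card_sub_X_natDegree_eq K Fintype.one_lt_card]
  obtain ⟨t, ht⟩ := IsAlgClosed.exists_root (X ^ Fintype.card k - X - C w : K[X])
    (degree_ne_of_natDegree_ne (natDegree_eq ▸ Fintype.card_ne_zero))
  exact ⟨t, sub_eq_zero.1 (by simpa [artinSchreier_apply] using ht)⟩

section Trace

theorem artinSchreier_eq_zero_iff {k A : Type*} [Field k] [Fintype k] [CommRing A] [IsDomain A]
    [Algebra k A] {t : A} : artinSchreier k t = 0 ↔ t ∈ Set.range (algebraMap k A) := by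
  constructor
  · intro ht
    have splits : (X ^ Fintype.card k - X : k[X]).Splits := by
      rw [splits_iff_card_roots, FiniteField.roots_X_pow_card_sub_X,
        FiniteField.X_pow_card_sub_X_natDegree_eq k Fintype.one_lt_card, card_val, card_univ]
    refine splits.mem_range_of_isRoot
      (FiniteField.X_pow_card_sub_X_ne_zero k Fintype.one_lt_card) ?_
    simpa [artinSchreier_apply] using ht
  · rintro ⟨c, rfl⟩
    rw [artinSchreier_apply, ← map_pow, FiniteField.pow_card, sub_self]

variable {k F B : Type*} [Field k] [Fintype k] [Field F] [Algebra k F]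

local notation "p" => Fintype.card k

theorem algebraMap_trace_of_artinSchreier_eq [Fintype F] [CommRing B] [Algebra F B]
    [Algebra k B] [IsScalarTower k F B] {t : B} {w : F}
    (ht : artinSchreier k t = algebraMap F B w) :
    algebraMap k B (Algebra.trace k F w) = artinSchreier F t := by
  have artinSchreier_pow (i : ℕ) : artinSchreier k t ^ p ^ i = artinSchreier k (t ^ p ^ i) := by
    simp only [← frobeniusAlgHom_pow_apply, artinSchreier_apply, map_sub, map_pow]
  rw [IsScalarTower.algebraMap_apply k F B, FiniteField.algebraMap_trace_eq_sum_pow, map_sum]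
  simp only [map_pow, ← ht, Nat.card_eq_fintype_card, artinSchreier_pow]
  rw [← map_sum, artinSchreier_sum_pow, artinSchreier_apply,
    Module.card_eq_pow_finrank (K := k) (V := F)]

theorem trace_artinSchreier [Finite F] (t : F) : Algebra.trace k F (artinSchreier k t) = 0 := by
  have := Fintype.ofFinite F
  apply (algebraMap k F).injective
  rw [algebraMap_trace_of_artinSchreier_eq (B := F) rfl, map_zero, artinSchreier_eq_zero_iff]
  exact ⟨t, rfl⟩

theorem trace_eq_zero_iff_exists_artinSchreier [Finite F] {w : F} :
    Algebra.trace k F w = 0 ↔ ∃ t, artinSchreier k t = w := by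
  refine ⟨fun hw => ?_, fun ⟨t, ht⟩ => ht ▸ trace_artinSchreier t⟩
  have := Fintype.ofFinite F
  obtain ⟨t, ht⟩ := exists_artinSchreier_eq k (algebraMap F (AlgebraicClosure F) w)
  obtain ⟨t₀, rfl⟩ : t ∈ Set.range (algebraMap F _) := by
    rw [← artinSchreier_eq_zero_iff, ← algebraMap_trace_of_artinSchreier_eq ht, hw, map_zero]
  refine ⟨t₀, (algebraMap F (AlgebraicClosure F)).injective ?_⟩
  rw [← ht, artinSchreier_apply, artinSchreier_apply, map_sub, map_pow]

theorem card_artinSchreier_eq [Fintype F] [DecidableEq k] [DecidableEq F] (w : F) :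
    #{t : F | artinSchreier k t = w} = if Algebra.trace k F w = 0 then p else 0 := by
  split_ifs with hw
  · have card_ker : #{t : F | artinSchreier k t = 0} = p := by
      simp only [artinSchreier_eq_zero_iff]
      rw [← card_univ, ← card_image_of_injective univ (algebraMap k F).injective]
      congr 1
      ext t
      simp
    rw [← card_ker]
    exact AddMonoidHom.card_fiber_eq_of_mem_range (artinSchreier k : F →ₗ[k] F)
      (trace_eq_zero_iff_exists_artinSchreier.1 hw) ⟨0, map_zero _⟩
  · rw [card_eq_zero, filter_eq_empty_iff]
    exact fun t _ ht => hw (trace_eq_zero_iff_exists_artinSchreier.2 ⟨t, ht⟩)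

end Trace

section GaloisTrace

variable {k F L : Type*} [Field k] [Fintype k] [Field F] [Field L] [Algebra k L] [Algebra F L]
  [FiniteDimensional F L] [IsGalois F L]

local notation "p" => Fintype.card k

theorem trace_pow_card_pow (x : L) (i : ℕ) :
    Algebra.trace F L (x ^ p ^ i) = Algebra.trace F L x ^ p ^ i := by
  apply (algebraMap F L).injective
  simp only [map_pow, trace_eq_sum_automorphisms, sum_pow_card_pow]

theorem trace_Egen (e : ℕ) (a : ℕ → F) (x : L) :
    Algebra.trace F L (Egen p e (fun i => algebraMap F L (a i)) x) =
      Egen p e a (Algebra.trace F L x) := by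
  simp only [Egen, Rgen, map_add, map_sum, trace_pow_card_pow, ← Algebra.smul_def, map_smul,
    smul_eq_mul]

end GaloisTrace

theorem card_mul_card_fiber {G H Φ : Type*} [AddGroup G] [AddGroup H] [Fintype G] [Fintype H]
    [DecidableEq H] [FunLike Φ G H] [AddMonoidHomClass Φ G H] {g : Φ}
    (hg : Function.Surjective g) (h : H) :
    Fintype.card H * #{x | g x = h} = Fintype.card G := by
  calc Fintype.card H * #{x | g x = h}
    _ = ∑ h' : H, #{x | g x = h'} := by
      rw [sum_congr rfl fun h' _ => AddMonoidHom.card_fiber_eq_of_mem_range g (hg h') (hg h),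
        sum_const, card_univ, smul_eq_mul]
    _ = Fintype.card G := (card_eq_sum_card_fiberwise fun _ _ => mem_univ _).symm

section CurveForm

variable (k : Type*) {A : Type*} [Field k] [Fintype k] [CommRing A] [Algebra k A]

local notation "p" => Fintype.card k

/-- The quadratic form `x ↦ Tr (x R(x))` over the field `k` with `p` elements. Its zeros are the
`x`-coordinates of the points of `y ^ p - y = x R(x)` (see `card_curve`). -/
noncomputable def curveForm (e : ℕ) (a : ℕ → A) (x : A) : k :=
  Algebra.trace k A (x * Rgen p e a x)

/-- The `k`-linear functional `z ↦ Tr (z ^ p ^ e * c)`. For `c = E_R(y)` it is the pairing with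
`y` under the bilinear form attached to `curveForm` (see `curveForm_add`). -/
noncomputable def traceFrobeniusMul (e : ℕ) (c : A) : A →ₗ[k] k :=
  Algebra.trace k A ∘ₗ LinearMap.mulRight k c ∘ₗ (FiniteField.frobeniusAlgHom k A ^ e).toLinearMap

theorem traceFrobeniusMul_apply (e : ℕ) (c z : A) :
    traceFrobeniusMul k e c z = Algebra.trace k A (z ^ p ^ e * c) := by
  simp only [traceFrobeniusMul, LinearMap.comp_apply, AlgHom.toLinearMap_apply,
    frobeniusAlgHom_pow_apply, LinearMap.mulRight_apply]

theorem traceFrobeniusMul_zero (e : ℕ) (z : A) : traceFrobeniusMul k e 0 z = 0 := by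
  rw [traceFrobeniusMul_apply, mul_zero, map_zero]

variable {F : Type*} [Field F] [Algebra k F] (e : ℕ)

theorem traceFrobeniusMul_surjective [Finite F] {c : F} (hc : c ≠ 0) :
    Function.Surjective (traceFrobeniusMul k e c) := by
  refine (Algebra.trace_surjective k F).comp
    ((mul_right_surjective₀ hc).comp (Finite.injective_iff_surjective.1 ?_))
  exact (FiniteField.frobeniusAlgHom k F ^ e : F →ₐ[k] F).injective

theorem curveForm_add [Finite F] (a : ℕ → F) (x y : F) :
    curveForm k e a (x + y) =
      curveForm k e a x + curveForm k e a y + traceFrobeniusMul k e (Egen p e a y) x := by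
  have expand : (x + y) * Rgen p e a (x + y) = x * Rgen p e a x + y * Rgen p e a y +
      x ^ p ^ e * Egen p e a y + artinSchreier k (fgen p e a x y) := by
    rw [Rgen_add, artinSchreier_fgen]
    ring
  rw [curveForm, expand, map_add, trace_artinSchreier, add_zero, map_add, map_add,
    traceFrobeniusMul_apply, curveForm, curveForm]

theorem card_curve [Fintype F] [DecidableEq k] [DecidableEq F] (a : ℕ → F) :
    #{z : F × F | z.2 ^ p - z.2 = z.1 * Rgen p e a z.1} = p * #{x | curveForm k e a x = 0} := by
  calc #{z : F × F | z.2 ^ p - z.2 = z.1 * Rgen p e a z.1}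
    _ = ∑ x : F, #{y : F | artinSchreier k y = x * Rgen p e a x} := by
      rw [card_filter, Fintype.sum_prod_type]
      exact sum_congr rfl fun x _ => (card_filter _ _).symm
    _ = p * #{x | curveForm k e a x = 0} := by
      simp only [card_artinSchreier_eq]
      rw [← sum_filter, sum_const, smul_eq_mul, mul_comm]
      rfl

end CurveForm

section QuadraticExtension

variable {k F L : Type*} [Field k] [Fintype k] [Field F] [Field L] [Algebra k F] [Algebra F L]
  [Algebra k L] [IsScalarTower k F L] [CharP F 2]

local notation "p" => Fintype.card k

theorem algebraMap_trace_eq_artinSchreier [Fintype F] [Finite L] (hL : Module.finrank F L = 2)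
    (x : L) :
    algebraMap F L (Algebra.trace F L x) = artinSchreier F x := by
  have : CharP L 2 := charP_of_injective_algebraMap (algebraMap F L).injective 2
  rw [FiniteField.algebraMap_trace_eq_sum_pow, hL, sum_range_succ, sum_range_one,
    Nat.card_eq_fintype_card, artinSchreier_apply, CharTwo.sub_eq_add, pow_zero, pow_one, pow_one,
    add_comm]

theorem card_trace_fiber [Fintype F] [Fintype L] [DecidableEq F] (hL : Module.finrank F L = 2)
    (P : L → Prop) [DecidablePred P] (y : L) :
    #{x | Algebra.trace F L x = Algebra.trace F L y ∧ P x} =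
      #{z : F | P (algebraMap F L z + y)} := by
  classical
  have shift_injective : Function.Injective (fun z : F => algebraMap F L z + y) :=
    (add_left_injective y).comp (algebraMap F L).injective
  rw [← card_image_of_injective _ shift_injective]
  congr 1
  ext x
  have trace_eq_iff :
      Algebra.trace F L x = Algebra.trace F L y ↔ ∃ z, algebraMap F L z + y = x := by
    rw [← sub_eq_zero, ← map_sub, ← map_eq_zero (algebraMap F L),
      algebraMap_trace_eq_artinSchreier hL, artinSchreier_eq_zero_iff, Set.mem_range]
    simp only [eq_sub_iff_add_eq]
  simp only [mem_filter, mem_univ, true_and, mem_image, trace_eq_iff]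
  constructor
  · rintro ⟨⟨z, rfl⟩, hz⟩
    exact ⟨z, hz, rfl⟩
  · rintro ⟨z, hz, rfl⟩
    exact ⟨⟨z, rfl⟩, hz⟩

variable (e : ℕ) (a : ℕ → F)

theorem curveForm_algebraMap [Finite F] [Finite L] (hL : Module.finrank F L = 2) (z : F) :
    curveForm k e (fun i => algebraMap F L (a i)) (algebraMap F L z) = 0 := by
  rw [curveForm, ← map_Rgen, ← map_mul, ← Algebra.trace_trace (S := F), Algebra.trace_algebraMap,
    hL, two_nsmul, CharTwo.add_self_eq_zero, map_zero]

theorem curveForm_algebraMap_add [Finite F] [Finite L] (hL : Module.finrank F L = 2) (z : F)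
    (y : L) :
    curveForm k e (fun i => algebraMap F L (a i)) (algebraMap F L z + y) =
      curveForm k e (fun i => algebraMap F L (a i)) y +
        traceFrobeniusMul k e (Egen p e a (Algebra.trace F L y)) z := by
  rw [curveForm_add, curveForm_algebraMap e a hL, zero_add, traceFrobeniusMul_apply,
    traceFrobeniusMul_apply, ← Algebra.trace_trace (S := F), ← map_pow, ← Algebra.smul_def,
    map_smul, smul_eq_mul, trace_Egen]

theorem algebraMap_curveForm_eq_fgen [Finite F] [Finite L] (hL : Module.finrank F L = 2) {y : L}
    {u b : F} (hy : Algebra.trace F L y = u) (hu : Egen p e a u = 0)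
    (hb : artinSchreier k b = u * Rgen p e a u) :
    algebraMap k F (curveForm k e (fun i => algebraMap F L (a i)) y) = fgen p e a u u := by
  have := Fintype.ofFinite F
  set ι := algebraMap F L
  set a' : ℕ → L := fun i => ι (a i)
  set σ := FiniteField.frobeniusAlgHom F L
  have σ_ι (z : F) : σ (ι z) = ι z := σ.commutes z
  have σ_y : σ y = y + ι u := by
    rw [← hy, algebraMap_trace_eq_artinSchreier hL]
    exact (add_sub_cancel y (σ y)).symm
  have trace_eq : ι (Algebra.trace F L (y * Rgen p e a' y)) =
      y * Rgen p e a' (ι u) + ι u * Rgen p e a' y + ι u * Rgen p e a' (ι u) := by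
    have : artinSchreier F (y * Rgen p e a' y) = σ (y * Rgen p e a' y) - y * Rgen p e a' y := rfl
    rw [algebraMap_trace_eq_artinSchreier hL, this, map_mul, map_Rgen, σ_y, Rgen_add]
    simp only [a', σ_ι]
    ring
  set t := fgen p e a' y (ι u) + ι b
  have artinSchreier_t : artinSchreier k t = ι (Algebra.trace F L (y * Rgen p e a' y)) := by
    have artinSchreier_ι_b : artinSchreier k (ι b) = ι u * Rgen p e a' (ι u) := by
      rw [← map_Rgen ι, ← map_mul, ← hb, artinSchreier_apply, artinSchreier_apply, map_sub, map_pow]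
    rw [trace_eq, map_add, artinSchreier_fgen, ← map_Egen ι, hu, map_zero, mul_zero, sub_zero,
      artinSchreier_ι_b]
  have σ_t : σ t = fgen p e a' (ι u) (ι u) + t := by
    simp only [t, a', map_add, map_fgen, σ_ι, σ_y, fgen_add_left]
    ring
  apply ι.injective
  calc ι (algebraMap k F (curveForm k e a' y))
    _ = algebraMap k L (Algebra.trace k F (Algebra.trace F L (y * Rgen p e a' y))) := by
      rw [curveForm, ← Algebra.trace_trace (S := F), ← IsScalarTower.algebraMap_apply]
    _ = σ t - t := algebraMap_trace_of_artinSchreier_eq artinSchreier_t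
    _ = ι (fgen p e a u u) := by rw [σ_t, add_sub_cancel_right, map_fgen]

theorem card_mul_card_trace_fiber_curveForm [Fintype F] [Fintype L] [DecidableEq k] [DecidableEq F]
    (hL : Module.finrank F L = 2) {u : F}
    (hb : Egen p e a u = 0 → ∃ b, artinSchreier k b = u * Rgen p e a u) :
    p * #{x : L | Algebra.trace F L x = u ∧ curveForm k e (fun i => algebraMap F L (a i)) x = 0} =
      if Egen p e a u = 0 then if fgen p e a u u = 0 then p * Fintype.card F else 0
      else Fintype.card F := by
  obtain ⟨y, hy⟩ := Algebra.trace_surjective F L u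
  subst hy
  rw [card_trace_fiber hL]
  simp only [curveForm_algebraMap_add e a hL]
  by_cases hu : Egen p e a (Algebra.trace F L y) = 0
  · obtain ⟨b, hb⟩ := hb hu
    simp [hu, traceFrobeniusMul_zero, ← algebraMap_curveForm_eq_fgen e a hL rfl hu hb, filter_const,
      apply_ite card]
  · simp only [if_neg hu, add_eq_zero_iff_eq_neg']
    exact card_mul_card_fiber (traceFrobeniusMul_surjective k e hu) _

end QuadraticExtension

section Poly

/-- The additive polynomial `E_R` as an element of `A[X]`. -/
noncomputable def EgenPoly {A : Type*} [CommRing A] (p e : ℕ) (a : ℕ → A) : A[X] :=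
  Egen p e (fun i => C (a i)) X

/-- The polynomial `f_R(X, X)`, the restriction of the cocycle `f_R` to the diagonal. -/
noncomputable def fgenDiagPoly {A : Type*} [CommRing A] (p e : ℕ) (a : ℕ → A) : A[X] :=
  fgen p e (fun i => C (a i)) X X

theorem eval_EgenPoly {A : Type*} [CommRing A] {p e : ℕ} (a : ℕ → A) (x : A) :
    (EgenPoly p e a).eval x = Egen p e a x := by
  simpa [EgenPoly] using map_Egen (p := p) (e := e) (evalRingHom x) (fun i => C (a i)) X

theorem eval_fgenDiagPoly {A : Type*} [CommRing A] {p e : ℕ} (a : ℕ → A) (x : A) :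
    (fgenDiagPoly p e a).eval x = fgen p e a x x := by
  simpa [fgenDiagPoly] using map_fgen (p := p) (e := e) (evalRingHom x) (fun i => C (a i)) X X

theorem map_EgenPoly {A B : Type*} [CommRing A] [CommRing B] (φ : A →+* B) {p e : ℕ} (a : ℕ → A) :
    (EgenPoly p e a).map φ = EgenPoly p e (fun i => φ (a i)) := by
  simpa [EgenPoly] using map_Egen (p := p) (e := e) (mapRingHom φ) (fun i => C (a i)) X

variable {F : Type*} [Field F] {p e : ℕ} {a : ℕ → F}

theorem natDegree_Rgen_X (hp : 1 < p) (ha : a e ≠ 0) :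
    (Rgen p e (fun i => C (a i)) X).natDegree = p ^ e := by
  refine natDegree_eq_of_le_of_coeff_ne_zero ?_ ?_
  · refine natDegree_sum_le_of_forall_le _ _ fun i hi => (natDegree_C_mul_X_pow_le _ _).trans ?_
    exact Nat.pow_le_pow_right hp.le (mem_range_succ_iff.1 hi)
  · simpa [Rgen, finsetSum_coeff, (Nat.pow_right_injective hp).eq_iff] using ha

theorem natDegree_EgenPoly (hp : 1 < p) (he : 0 < e) (ha : a e ≠ 0) :
    (EgenPoly p e a).natDegree = p ^ (2 * e) := by
  have natDegree_Rgen_pow : (Rgen p e (fun i => C (a i)) X ^ p ^ e).natDegree = p ^ (2 * e) := by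
    rw [natDegree_pow, natDegree_Rgen_X hp ha, ← pow_add, two_mul]
  have natDegree_sum_le :
      (∑ i ∈ range (e + 1), (C (a i) * X) ^ p ^ (e - i)).natDegree ≤ p ^ e := by
    refine natDegree_sum_le_of_forall_le _ _ fun i _ => ?_
    rw [mul_pow, ← C_pow]
    exact (natDegree_C_mul_X_pow_le _ _).trans (Nat.pow_le_pow_right hp.le (Nat.sub_le e i))
  rw [EgenPoly, Egen, natDegree_add_eq_left_of_natDegree_lt, natDegree_Rgen_pow]
  rw [natDegree_Rgen_pow]
  exact natDegree_sum_le.trans_lt (Nat.pow_lt_pow_right hp (by lia))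

theorem derivative_EgenPoly (hp : (p : F) = 0) (he : 0 < e) :
    derivative (EgenPoly p e a) = C (a e) := by
  have cast_pow_eq_zero {i : ℕ} (hi : 0 < i) : ((p ^ i : ℕ) : F[X]) = 0 := by
    rw [Nat.cast_pow, ← map_natCast C, hp, map_zero, zero_pow hi.ne']
  have lower_terms : ∀ i ∈ range e, derivative ((C (a i) * X) ^ p ^ (e - i)) = 0 := fun i hi => by
    rw [derivative_pow, map_natCast, cast_pow_eq_zero (Nat.sub_pos_of_lt (mem_range.1 hi)),
      zero_mul, zero_mul]
  rw [EgenPoly, Egen, derivative_add, derivative_pow, map_natCast, cast_pow_eq_zero he, zero_mul,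
    zero_mul, zero_add, derivative_sum, sum_range_succ, sum_eq_zero lower_terms, zero_add,
    Nat.sub_self, pow_zero, pow_one, derivative_C_mul, derivative_X, mul_one]

theorem separable_EgenPoly (hp : (p : F) = 0) (he : 0 < e) (ha : a e ≠ 0) :
    (EgenPoly p e a).Separable := by
  rw [separable_def, derivative_EgenPoly hp he]
  exact ⟨0, C (a e)⁻¹, by rw [zero_mul, zero_add, ← C_mul, inv_mul_cancel₀ ha, C_1]⟩

theorem roots_EgenPoly [Fintype F] [DecidableEq F] (hp : (p : F) = 0) (he : 0 < e) (ha : a e ≠ 0) :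
    (EgenPoly p e a).roots = ({u | Egen p e a u = 0} : Finset F).val := by
  have separable := separable_EgenPoly hp he ha
  refine Multiset.Nodup.ext (nodup_roots separable) (nodup _) |>.2 fun u => ?_
  simp [mem_roots separable.ne_zero, eval_EgenPoly]

theorem roots_eq_filter_roots_pow_sub [DecidableEq F] {g : F[X]} {m : ℕ} (hm : 1 < m)
    (hg : g ^ m - g ≠ 0) : g.roots = (g ^ m - g).roots.filter g.IsRoot := by
  have factor : g ^ m - g = g * (g ^ (m - 1) - 1) := by
    rw [mul_sub, mul_one, mul_pow_sub_one (by lia)]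
  ext v
  rw [Multiset.count_filter]
  split_ifs with hv
  · have cofactor : ¬ (g ^ (m - 1) - 1).IsRoot v := by
      simp [hv.eq_zero, zero_pow (Nat.sub_ne_zero_of_lt hm)]
    rw [factor] at hg ⊢
    rw [count_roots, count_roots, rootMultiplicity_mul hg, rootMultiplicity_eq_zero cofactor,
      add_zero]
  · rw [count_roots, rootMultiplicity_eq_zero hv]

end Poly

section DiagonalZeros

variable {k F : Type*} [Field k] [Fintype k] [Field F] [Algebra k F]
  {e : ℕ} {a : ℕ → F}

local notation "p" => Fintype.card k

theorem cast_card_eq_zero : (p : F) = 0 := by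
  rw [← map_natCast (algebraMap k F), FiniteField.cast_card_eq_zero, map_zero]

theorem card_Egen_eq_zero [Fintype F] [DecidableEq F] (he : 0 < e) (ha : a e ≠ 0)
    (hE : (EgenPoly p e a).Splits) : #{u | Egen p e a u = 0} = p ^ (2 * e) := by
  rw [← natDegree_EgenPoly Fintype.one_lt_card he ha, hE.natDegree_eq_card_roots,
    roots_EgenPoly cast_card_eq_zero he ha, card_val]

variable [CharP F 2]

theorem fgenDiagPoly_pow_card_sub :
    fgenDiagPoly p e a ^ p - fgenDiagPoly p e a = X ^ p ^ e * EgenPoly p e a := by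
  rw [fgenDiagPoly, ← artinSchreier_apply, artinSchreier_fgen, CharTwo.add_self_eq_zero, zero_sub,
    CharTwo.neg_eq, EgenPoly]

theorem card_mul_natDegree_fgenDiagPoly (he : 0 < e) (ha : a e ≠ 0) :
    p * (fgenDiagPoly p e a).natDegree = p ^ e + p ^ (2 * e) := by
  have E_ne_zero := (separable_EgenPoly (cast_card_eq_zero (k := k)) he ha).ne_zero
  calc p * (fgenDiagPoly p e a).natDegree
    _ = ((X ^ p - X : F[X]).comp (fgenDiagPoly p e a)).natDegree := by
      rw [natDegree_comp, FiniteField.X_pow_card_sub_X_natDegree_eq F Fintype.one_lt_card]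
    _ = (X ^ p ^ e * EgenPoly p e a).natDegree := by
      rw [sub_comp, X_pow_comp, X_comp, fgenDiagPoly_pow_card_sub]
    _ = p ^ e + p ^ (2 * e) := by
      rw [natDegree_mul (pow_ne_zero _ X_ne_zero) E_ne_zero, natDegree_X_pow,
        natDegree_EgenPoly Fintype.one_lt_card he ha]

theorem card_Egen_eq_zero_and_fgen_diag_eq_zero [Fintype F] [DecidableEq F] (he : 0 < e)
    (ha : a e ≠ 0) (hE : (EgenPoly p e a).Splits) :
    p * (p ^ e + #{u | Egen p e a u = 0 ∧ fgen p e a u u = 0}) = p ^ e + p ^ (2 * e) := by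
  set f := fgenDiagPoly p e a
  have factor : f ^ p - f = X ^ p ^ e * EgenPoly p e a := fgenDiagPoly_pow_card_sub
  have factor_ne_zero : f ^ p - f ≠ 0 := factor ▸ mul_ne_zero (pow_ne_zero _ X_ne_zero)
    (separable_EgenPoly (cast_card_eq_zero (k := k)) he ha).ne_zero
  have f_splits : f.Splits := by
    refine Splits.of_dvd (factor ▸ (Splits.X_pow _).mul hE) factor_ne_zero ?_
    exact dvd_sub (dvd_pow_self f Fintype.card_ne_zero) dvd_rfl
  have f_zero : f.IsRoot 0 := by
    simpa [f, IsRoot, eval_fgenDiagPoly] using fgen_add_left k e a 0 0 0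
  have roots_eq : f.roots =
      p ^ e • {0} + ({u | Egen p e a u = 0 ∧ fgen p e a u u = 0} : Finset F).val := by
    rw [roots_eq_filter_roots_pow_sub Fintype.one_lt_card factor_ne_zero, factor,
      roots_mul (factor ▸ factor_ne_zero), roots_X_pow, Multiset.filter_add, Multiset.filter_nsmul,
      roots_EgenPoly cast_card_eq_zero he ha, Multiset.filter_singleton, if_pos f_zero,
      ← filter_val, filter_filter]
    simp only [f, IsRoot, eval_fgenDiagPoly]
  rw [← card_mul_natDegree_fgenDiagPoly he ha, f_splits.natDegree_eq_card_roots, roots_eq,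
    Multiset.card_add, Multiset.card_nsmul, Multiset.card_singleton, card_val, mul_one]

end DiagonalZeros

section PointCount

variable {k F L : Type*} [Field k] [Fintype k] [Field F] [Fintype F] [Field L]
  [Fintype L] [DecidableEq L] [Algebra k F] [Algebra F L] [Algebra k L] [IsScalarTower k F L]
  [CharP F 2] {e : ℕ} {a : ℕ → F}

local notation "p" => Fintype.card k

theorem card_curve_quadraticExtension (hL : Module.finrank F L = 2) (he : 0 < e) (ha : a e ≠ 0)
    (hE : (EgenPoly p e a).Splits)
    (hb : ∀ u, Egen p e a u = 0 → ∃ b, artinSchreier k b = u * Rgen p e a u) :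
    (#{z : L × L | z.2 ^ p - z.2 = z.1 * Rgen p e (fun i => algebraMap F L (a i)) z.1} : ℤ) =
      (Fintype.card F : ℤ) ^ 2 - ((p : ℤ) - 1) * (p : ℤ) ^ e * Fintype.card F := by
  classical
  set q := Fintype.card F
  have card_V : #{u | Egen p e a u = 0} = p ^ (2 * e) := card_Egen_eq_zero he ha hE
  have card_V_compl : p ^ (2 * e) + #{u | ¬ Egen p e a u = 0} = q := by
    rw [← card_V, card_filter_add_card_filter_not, card_univ]
  have card_isotropic := card_Egen_eq_zero_and_fgen_diag_eq_zero he ha hE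
  set m := #{u | Egen p e a u = 0 ∧ fgen p e a u u = 0}
  have card_eq : #{z : L × L |
      z.2 ^ p - z.2 = z.1 * Rgen p e (fun i => algebraMap F L (a i)) z.1} =
        p * q * m + q * #{u | ¬ Egen p e a u = 0} := by
    calc _ = ∑ u : F, p * #{x : L | Algebra.trace F L x = u ∧
          curveForm k e (fun i => algebraMap F L (a i)) x = 0} := by
          rw [card_curve, card_eq_sum_card_fiberwise (t := univ) (f := Algebra.trace F L)
            fun _ _ => mem_univ _, mul_sum]
          simp only [filter_filter, and_comm]
      _ = p * q * m + q * #{u | ¬ Egen p e a u = 0} := by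
          simp only [card_mul_card_trace_fiber_curveForm e a hL (hb _)]
          rw [sum_ite, ← sum_filter, sum_const, sum_const, filter_filter, smul_eq_mul, smul_eq_mul,
            mul_comm, mul_comm q]
  rw [card_eq]
  push_cast
  zify at card_V_compl card_isotropic
  linear_combination (q : ℤ) * card_isotropic + (q : ℤ) * card_V_compl

end PointCount

section Evenness

theorem exists_addChar_int_ne_one (k : Type*) [Field k] [Finite k] [CharP k 2] :
    ∃ ψ : AddChar k ℤ, ψ ≠ 1 := by
  have := ZMod.algebra k 2
  let χ : AddChar (ZMod 2) ℤ := AddChar.zmodChar 2 (ζ := -1) (by norm_num)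
  refine ⟨χ.compAddMonoidHom (Algebra.trace (ZMod 2) k), fun h => ?_⟩
  obtain ⟨c, hc⟩ := Algebra.trace_surjective (ZMod 2) k 1
  have : (-1 : ℤ) = 1 := by
    simpa [χ, hc, AddChar.zmodChar_apply, ZMod.val_one] using DFunLike.congr_fun h c
  norm_num at this

variable {k F : Type*} [Field k] [Fintype k] [Field F] [Fintype F] [Algebra k F] {e : ℕ}

local notation "p" => Fintype.card k

theorem sum_addChar_traceFrobeniusMul [DecidableEq F] {R : Type*} [CommRing R] [IsDomain R]
    {ψ : AddChar k R} (hψ : ψ ≠ 1) (c : F) :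
    ∑ x : F, ψ (traceFrobeniusMul k e c x) = if c = 0 then (Fintype.card F : R) else 0 := by
  split_ifs with hc
  · simp [hc, traceFrobeniusMul_zero]
  · set T := (traceFrobeniusMul k e c).toAddMonoidHom
    have comp_ne_one : ψ.compAddMonoidHom T ≠ 1 := fun h => by
      apply hψ
      ext y
      obtain ⟨x, rfl⟩ := traceFrobeniusMul_surjective k e hc y
      exact DFunLike.congr_fun h x
    exact AddChar.sum_eq_zero_of_ne_one comp_ne_one

variable [CharP F 2] {a : ℕ → F}

theorem sq_sum_addChar_curveForm [DecidableEq F] {R : Type*} [CommRing R] [IsDomain R]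
    {ψ : AddChar k R} (hψ : ψ ≠ 1)
    (hb : ∀ u, Egen p e a u = 0 → ∃ b, artinSchreier k b = u * Rgen p e a u) :
    (∑ x, ψ (curveForm k e a x)) ^ 2 = Fintype.card F * #{u | Egen p e a u = 0} := by
  have : CharP k 2 := (algebraMap k F).charP (algebraMap k F).injective 2
  have curveForm_add_self (x u : F) : curveForm k e a x + curveForm k e a (x + u) =
      curveForm k e a u + traceFrobeniusMul k e (Egen p e a u) x := by
    rw [curveForm_add, ← add_assoc, ← add_assoc, CharTwo.add_self_eq_zero, zero_add]
  calc (∑ x, ψ (curveForm k e a x)) ^ 2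
    _ = ∑ x, ∑ u, ψ (curveForm k e a x + curveForm k e a (x + u)) := by
      rw [sq, sum_mul_sum]
      refine sum_congr rfl fun x _ => ?_
      simp only [AddChar.map_add_eq_mul]
      exact (Equiv.sum_comp (Equiv.addLeft x) _).symm
    _ = ∑ u, ψ (curveForm k e a u) * ∑ x, ψ (traceFrobeniusMul k e (Egen p e a u) x) := by
      rw [sum_comm]
      simp only [curveForm_add_self, AddChar.map_add_eq_mul, mul_sum]
    _ = ∑ u with Egen p e a u = 0, (Fintype.card F : R) := by
      rw [sum_filter]
      refine sum_congr rfl fun u _ => ?_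
      rw [sum_addChar_traceFrobeniusMul hψ, mul_ite, mul_zero]
      refine ite_congr rfl (fun hu => ?_) fun _ => rfl
      obtain ⟨b, hb⟩ := hb u hu
      rw [curveForm, ← hb, trace_artinSchreier, AddChar.map_zero_eq_one, one_mul]
    _ = Fintype.card F * #{u | Egen p e a u = 0} := by
      rw [sum_const, nsmul_eq_mul, mul_comm]

theorem isSquare_card_of_splits_EgenPoly (he : 0 < e) (ha : a e ≠ 0) (hE : (EgenPoly p e a).Splits)
    (hb : ∀ u, Egen p e a u = 0 → ∃ b, artinSchreier k b = u * Rgen p e a u) :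
    IsSquare (Fintype.card F) := by
  classical
  have : CharP k 2 := (algebraMap k F).charP (algebraMap k F).injective 2
  obtain ⟨ψ, hψ⟩ := exists_addChar_int_ne_one k
  have sq_eq := sq_sum_addChar_curveForm hψ hb
  rw [card_Egen_eq_zero he ha hE, mul_comm 2 e, pow_mul] at sq_eq
  push_cast at sq_eq
  have p_pow_ne_zero : (p : ℤ) ^ e ≠ 0 := by positivity
  obtain ⟨c, hc⟩ : (p : ℤ) ^ e ∣ ∑ x, ψ (curveForm k e a x) :=
    (Int.pow_dvd_pow_iff two_ne_zero).1 (sq_eq ▸ dvd_mul_left _ _)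
  rw [hc, mul_pow, mul_comm] at sq_eq
  have c_sq : c ^ 2 = Fintype.card F := mul_right_cancel₀ (pow_ne_zero 2 p_pow_ne_zero) sq_eq
  exact Int.isSquare_natCast_iff.1 ⟨c, by rw [← c_sq, sq]⟩

end Evenness

section AlgClosure

variable {k F K : Type*} [Field k] [Fintype k] [Field F] [Field K] [IsAlgClosed K] [Algebra k F]
  [Algebra F K] {e : ℕ} {a : ℕ → F}

local notation "p" => Fintype.card k

theorem splits_EgenPoly_of_Hset_subset
    (hH : ∀ h ∈ Hset p e (fun i => algebraMap F K (a i)), ∃ x, algebraMap F K x = h.1) :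
    (EgenPoly p e a).Splits := by
  let _ : Algebra k K := ((algebraMap F K).comp (algebraMap k F)).toAlgebra
  refine Splits.of_splits_map (algebraMap F K) (IsAlgClosed.splits _) fun x hx => ?_
  obtain ⟨y, hy⟩ := exists_artinSchreier_eq k (x * Rgen p e (fun i => algebraMap F K (a i)) x)
  refine hH (x, y) ⟨?_, hy⟩
  rw [← eval_EgenPoly, ← map_EgenPoly]
  exact isRoot_of_mem_roots hx

theorem exists_artinSchreier_eq_of_Hset_subset
    (hH : ∀ h ∈ Hset p e (fun i => algebraMap F K (a i)), ∃ y, algebraMap F K y = h.2)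
    (u : F) (hu : Egen p e a u = 0) : ∃ b, artinSchreier k b = u * Rgen p e a u := by
  let _ : Algebra k K := ((algebraMap F K).comp (algebraMap k F)).toAlgebra
  obtain ⟨y, hy⟩ := exists_artinSchreier_eq k (algebraMap F K (u * Rgen p e a u))
  rw [map_mul, map_Rgen] at hy
  obtain ⟨b, rfl⟩ := hH (algebraMap F K u, y) ⟨by rw [← map_Egen, hu, map_zero], hy⟩
  refine ⟨b, (algebraMap F K).injective ?_⟩
  rw [map_mul, map_Rgen, ← hy, artinSchreier_apply, artinSchreier_apply, map_sub, map_pow]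

end AlgClosure

theorem exists_subfield_natCard_eq {F : Type*} [Field F] [Finite F] {ℓ n s : ℕ} [Fact ℓ.Prime]
    [CharP F ℓ] (hn : n ≠ 0) (hF : Nat.card F = (ℓ ^ n) ^ s) :
    ∃ k : Subfield F, Nat.card k = ℓ ^ n := by
  let _ := ZMod.algebra F ℓ
  have finrank_F : Module.finrank (ZMod ℓ) F = n * s := by
    rw [← Nat.pow_right_inj (Fact.out : ℓ.Prime).one_lt, pow_mul, ← hF,
      Module.natCard_eq_pow_finrank (K := ZMod ℓ), Nat.card_zmod]
  obtain ⟨φ⟩ : Nonempty (GaloisField ℓ n →ₐ[ZMod ℓ] F) := by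
    apply FiniteField.nonempty_algHom_of_finrank_dvd
    rw [GaloisField.finrank ℓ hn, finrank_F]
    exact dvd_mul_right n s
  refine ⟨φ.toRingHom.fieldRange, ?_⟩
  rw [← GaloisField.card ℓ n hn]
  exact Nat.card_range_of_injective φ.injective

theorem even_of_isSquare_prime_pow {ℓ m : ℕ} (hℓ : ℓ.Prime) (h : IsSquare (ℓ ^ m)) : Even m := by
  obtain ⟨c, hc⟩ := h
  obtain ⟨i, -, rfl⟩ := (Nat.dvd_prime_pow hℓ).1 (hc ▸ dvd_mul_right c c)
  exact ⟨i, Nat.pow_right_injective hℓ.two_le (hc.trans (pow_add _ _ _).symm)⟩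

/-- for `p₀ = 2` and `e ≥ 1`, if `H_R ⊆ F_q × F_q` then `f` is even and
`#{(x,y) ∈ F_{q²}² : y^p − y = x·R(x)} = q² − (p−1)p^e q`,
i.e. the Van der Geer–Van der Vlugt curve is `F_{q²}`-minimal. -/
theorem statement19 {F K F' : Type*} [Field F] [Fintype F]
    [Field K] [IsAlgClosed K] [Algebra F K]
    [Field F'] [Fintype F'] [DecidableEq F'] [Algebra F F']
    (n p s q e f : ℕ) [CharP F 2] (hn : 0 < n) (hpn : p = 2 ^ n)
    (hs : 0 < s) (hq : q = p ^ s) (hcard : Fintype.card F = q) (hf : q = 2 ^ f)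
    (a : ℕ → F) (hae : a e ≠ 0) (he : 1 ≤ e)
    -- `H_R ⊆ F_q × F_q`
    (hHF : ∀ h ∈ Hset p e (fun i => algebraMap F K (a i)),
      (∃ x : F, algebraMap F K x = h.1) ∧ (∃ y : F, algebraMap F K y = h.2))
    -- `F' = F_{q²}`
    (hcard' : Fintype.card F' = q ^ 2) :
    Even f ∧
    ((Finset.univ.filter fun z : F' × F' =>
        z.2 ^ p - z.2 = z.1 * Rgen p e (fun i => algebraMap F F' (a i)) z.1).card : ℤ) =
      (q : ℤ) ^ 2 - ((p : ℤ) - 1) * (p : ℤ) ^ e * (q : ℤ) := by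
  subst hpn hq
  obtain ⟨k, card_k⟩ := exists_subfield_natCard_eq hn.ne' (Nat.card_eq_fintype_card.trans hcard)
  have := Fintype.ofFinite k
  rw [Nat.card_eq_fintype_card] at card_k
  rw [← card_k] at hHF hcard hcard' hf ⊢
  have hE : (EgenPoly (Fintype.card k) e a).Splits :=
    splits_EgenPoly_of_Hset_subset fun h hh => (hHF h hh).1
  have hb := exists_artinSchreier_eq_of_Hset_subset fun h hh => (hHF h hh).2
  have finrank_F' : Module.finrank F F' = 2 := by
    rw [← Nat.pow_right_inj (Fintype.one_lt_card (α := F)), ← Module.card_eq_pow_finrank, hcard',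
      hcard]
  constructor
  · refine even_of_isSquare_prime_pow Nat.prime_two ?_
    rw [← hf, ← hcard]
    exact isSquare_card_of_splits_EgenPoly he hae hE hb
  · classical
    rw [← hcard]
    exact card_curve_quadraticExtension finrank_F' he hae hE hb
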